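/- (Proposition 3.) Let f : 𝒜 × ℬ → {0,1} be a target function and let M be a finite message set. Suppose that every classical strategy has worst-case success probability at most 1/2: for all probability distributions S(·|a) on M (a ∈ 𝒜) and R(·|A,b) on {0,1} (A ∈ M, b ∈ ℬ) there exist a ∈ 𝒜, b ∈ ℬ with Σ_{A∈M} R(f(a,b)|A,b) S(A|a) ≤ 1/2. Then every detection-loophole strategy also has worst-case success probability at most 1/2: for every probability distribution p on a finite strategy set I, distributions P(·|a) on M, distributions P_i(·|A,b) on {0,1}, and efficiencies η_i(A,b) ∈ [0,1] with D(a,b) := Σ_{i,A} p_i η_i(A,b) P(A|a) > 0 for all a, b, there exist a ∈ 𝒜, b ∈ ℬ with P_DL(f(a,b)|a,b) := (Σ_{i,A} p_i η_i(A,b) P_i(f(a,b)|A,b) P(A|a)) / D(a,b) ≤ 1/2. -/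

import Mathlib

/-!
Instead of reporting no click, Bob may guess his output from a fixed distribution `g`. This turns
a detection-loophole strategy into a classical one. If `D` is the probability of a click on inputs
`a, b` and `N` that of a click with output `B`, the classical strategy outputs `B` with probability
`N + (1 - D) * g B`, the convex combination of `N / D` and `g B` with weights `D > 0` and `1 - D`.
Hence it is no more likely to output `B` than the guess exactly when the post-selected strategy is
no more likely to. For two outputs, the uniform `g` gives the bound `1 / 2`.
-/

open Finset

section Distributions

variable {M I O K : Type*} [Fintype M] [Fintype I] [CommRing K]

/-- The subnormalized output distribution of a decoder that follows strategy `i` with probability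
`p i`, then clicks with probability `η i` and outputs according to `Q i`: its value at `B` is the
joint probability of a click and output `B`. -/
def clickDist (p η : I → K) (Q : I → O → K) (B : O) : K :=
  ∑ i, p i * η i * Q i B

theorem clickDist_nonneg [PartialOrder K] [IsOrderedRing K] {p η : I → K} {Q : I → O → K}
    (hp : ∀ i, 0 ≤ p i) (hη : ∀ i, 0 ≤ η i) (hQ : ∀ i B, 0 ≤ Q i B) (B : O) :
    0 ≤ clickDist p η Q B :=
  sum_nonneg fun i _ => mul_nonneg (mul_nonneg (hp i) (hη i)) (hQ i B)

variable [Fintype O]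

/-- The completion of a subnormalized distribution `q` in which the missing mass, that is, the
probability of no click, is distributed according to the guess `g`. -/
def guessCompletion (g q : O → K) (B : O) : K :=
  q B + (1 - ∑ B', q B') * g B

theorem sum_clickDist (p η : I → K) {Q : I → O → K} (hQ : ∀ i, ∑ B, Q i B = 1) :
    ∑ B, clickDist p η Q B = ∑ i, p i * η i := by
  simp only [clickDist]
  rw [sum_comm]
  simp only [← mul_sum, hQ, mul_one]

theorem sum_guessCompletion_mul (g : O → K) (q : M → O → K) {w : M → K} (hw : ∑ A, w A = 1)
    (B : O) :
    ∑ A, guessCompletion g (q A) B * w A =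
      ∑ A, q A B * w A + (1 - ∑ A, (∑ B', q A B') * w A) * g B := by
  rw [← hw, ← sum_sub_distrib, sum_mul, ← sum_add_distrib]
  refine sum_congr rfl fun A _ => ?_
  rw [guessCompletion]
  ring

variable [PartialOrder K] [IsOrderedRing K]

theorem sum_clickDist_le_one {p η : I → K} {Q : I → O → K} (hp : p ∈ stdSimplex K I)
    (hη : ∀ i, η i ≤ 1) (hQ : ∀ i, ∑ B, Q i B = 1) : ∑ B, clickDist p η Q B ≤ 1 :=
  calc
    ∑ B, clickDist p η Q B = ∑ i, p i * η i := sum_clickDist p η hQ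
    _ ≤ ∑ i, p i := sum_le_sum fun i _ => mul_le_of_le_one_right (hp.1 i) (hη i)
    _ = 1 := hp.2

theorem guessCompletion_mem_stdSimplex {g q : O → K} (hg : g ∈ stdSimplex K O)
    (hq : ∀ B, 0 ≤ q B) (hq1 : ∑ B, q B ≤ 1) : guessCompletion g q ∈ stdSimplex K O := by
  refine ⟨fun B => add_nonneg (hq B) (mul_nonneg (sub_nonneg.2 hq1) (hg.1 B)), ?_⟩
  simp only [guessCompletion, sum_add_distrib, ← mul_sum, hg.2, mul_one, add_sub_cancel]

theorem guessCompletion_clickDist_mem_stdSimplex {g : O → K} {p η : I → K} {Q : I → O → K}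
    (hg : g ∈ stdSimplex K O) (hp : p ∈ stdSimplex K I) (hη : ∀ i, 0 ≤ η i ∧ η i ≤ 1)
    (hQ : ∀ i, Q i ∈ stdSimplex K O) :
    guessCompletion g (clickDist p η Q) ∈ stdSimplex K O :=
  guessCompletion_mem_stdSimplex hg
    (clickDist_nonneg hp.1 (fun i => (hη i).1) fun i => (hQ i).1)
    (sum_clickDist_le_one hp (fun i => (hη i).2) fun i => (hQ i).2)

end Distributions

theorem div_le_iff_sum_guessCompletion_mul_le {M O K : Type*} [Fintype M] [Fintype O]
    [Field K] [LinearOrder K] [IsStrictOrderedRing K] (g : O → K) (q : M → O → K) {w : M → K}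
    (hw : ∑ A, w A = 1) (hD : 0 < ∑ A, (∑ B', q A B') * w A) (B : O) :
    (∑ A, q A B * w A) / (∑ A, (∑ B', q A B') * w A) ≤ g B ↔
      ∑ A, guessCompletion g (q A) B * w A ≤ g B := by
  rw [sum_guessCompletion_mul g q hw, div_le_iff₀ hD]
  constructor <;> intro h <;> linarith

theorem prop3_general {𝒜 ℬ M I O K : Type*} [Fintype M] [Fintype I] [Fintype O]
    [Field K] [LinearOrder K] [IsStrictOrderedRing K]
    (f : 𝒜 → ℬ → O) {g : ℬ → O → K} (hg : ∀ b, g b ∈ stdSimplex K O)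
    {P : 𝒜 → M → K} (hP : ∀ a, ∑ A, P a A = 1)
    (hclassical : ∀ R : M → ℬ → O → K, (∀ A b, R A b ∈ stdSimplex K O) →
      ∃ a b, ∑ A, R A b (f a b) * P a A ≤ g b (f a b))
    {p : I → K} (hp : p ∈ stdSimplex K I)
    {Q : I → M → ℬ → O → K} (hQ : ∀ i A b, Q i A b ∈ stdSimplex K O)
    {η : I → M → ℬ → K} (hη : ∀ i A b, 0 ≤ η i A b ∧ η i A b ≤ 1)
    (hD : ∀ a b, 0 < ∑ i, ∑ A, p i * η i A b * P a A) :
    ∃ a b, (∑ i, ∑ A, p i * η i A b * Q i A b (f a b) * P a A) /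
      (∑ i, ∑ A, p i * η i A b * P a A) ≤ g b (f a b) := by
  let q (A : M) (b : ℬ) : O → K := clickDist p (η · A b) (Q · A b)
  have click_and_output (a b) :
      ∑ i, ∑ A, p i * η i A b * Q i A b (f a b) * P a A = ∑ A, q A b (f a b) * P a A := by
    simp only [q, clickDist, sum_mul]
    exact sum_comm
  have click (a b) :
      ∑ i, ∑ A, p i * η i A b * P a A = ∑ A, (∑ B, q A b B) * P a A := by
    simp only [q, sum_clickDist p _ fun i => (hQ i _ b).2, sum_mul]
    exact sum_comm
  obtain ⟨a, b, hguess⟩ := hclassical (fun A b => guessCompletion (g b) (q A b)) fun A b =>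
    guessCompletion_clickDist_mem_stdSimplex (hg b) hp (hη · A b) (hQ · A b)
  refine ⟨a, b, ?_⟩
  rw [click_and_output, click, div_le_iff_sum_guessCompletion_mul_le (g b) (q · b) (hP a)]
  · exact hguess
  · exact click a b ▸ hD a b

/-- Proposition 3: if every classical strategy for computing
`f : 𝒜 → ℬ → Fin 2` with message set `M` has worst-case success probability at
most `1/2`, then so does every detection-loophole strategy: for any
distribution `p` on Bob's strategies `I`, encodings `P(·|a)`, decodings
`Pᵢ(·|A,b)` and efficiencies `ηᵢ(A,b) ∈ [0,1]` with positive click probability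
`D(a,b)`, there are inputs `a, b` with `P_DL(f(a,b)|a,b) ≤ 1/2`. -/
theorem prop3
    {𝒜 ℬ M I : Type*}
    [Fintype 𝒜] [Fintype ℬ] [Fintype M] [Fintype I]
    [Nonempty 𝒜] [Nonempty ℬ] [Nonempty M] [Nonempty I]
    (f : 𝒜 → ℬ → Fin 2)
    -- every classical strategy has worst-case success probability ≤ 1/2
    (hclassical : ∀ (S : 𝒜 → M → ℝ) (R : M → ℬ → Fin 2 → ℝ),
      (∀ a A, 0 ≤ S a A) → (∀ a, ∑ A, S a A = 1) →
      (∀ A b B, 0 ≤ R A b B) → (∀ A b, ∑ B, R A b B = 1) →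
      ∃ (a : 𝒜) (b : ℬ), ∑ A, R A b (f a b) * S a A ≤ 1 / 2)
    -- an arbitrary detection-loophole strategy
    (p : I → ℝ) (hp : ∀ i, 0 ≤ p i) (hp1 : ∑ i, p i = 1)
    (P : 𝒜 → M → ℝ) (hP : ∀ a A, 0 ≤ P a A) (hP1 : ∀ a, ∑ A, P a A = 1)
    (Pi : I → M → ℬ → Fin 2 → ℝ)
    (hPi : ∀ i A b B, 0 ≤ Pi i A b B) (hPi1 : ∀ i A b, ∑ B, Pi i A b B = 1)
    (η : I → M → ℬ → ℝ) (hη : ∀ i A b, 0 ≤ η i A b ∧ η i A b ≤ 1)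
    (hD : ∀ a b, 0 < ∑ i, ∑ A, p i * η i A b * P a A) :
    ∃ (a : 𝒜) (b : ℬ),
      (∑ i, ∑ A, p i * η i A b * Pi i A b (f a b) * P a A) /
        (∑ i, ∑ A, p i * η i A b * P a A) ≤ 1 / 2 := by
  have uniform_mem : (fun _ => 1 / 2 : Fin 2 → ℝ) ∈ stdSimplex ℝ (Fin 2) :=
    ⟨fun _ => by norm_num, by norm_num⟩
  exact prop3_general f (fun _ => uniform_mem) hP1
    (fun R hR => hclassical P R hP hP1 (fun A b => (hR A b).1) fun A b => (hR A b).2)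
    ⟨hp, hp1⟩ (fun i A b => ⟨hPi i A b, hPi1 i A b⟩) hη hD
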